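/- For every deterministic distributed algorithm on a channel with collision detection and every bound T, there exists a 1-activating injection pattern admissible for the adversary of type (3/4, 2) such that in the resulting execution some injected packet spends more than T rounds in a queue before being heard. Consequently, no deterministic distributed algorithm for channels with collision detection has bounded packet latency against a 1-activating adversary of injection rate 3/4 and burstiness at least 2. -/

import Mathlib

/-- Feedback that a station receives from the channel in a round. -/
inductive Feedback where
  | silence : Feedback
  | collision : Feedback
  | heard : Bool → Feedback

/-- A deterministic distributed (full-sensing) algorithm. -/
structure Algo where
  State : Type
  init : State
  transmits : State → Bool
  step : State → Feedback → Bool → State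

/-- Admissibility of a 1-activating injection pattern for the adversary of type `(ρ, b)`. -/
def Admissible (ρ : ℝ) (b : ℕ) (a : ℕ → ℕ) : Prop :=
  ∀ s n : ℕ, ((∑ t ∈ Finset.Ico s (s + n), a t : ℕ) : ℝ) ≤ ρ * n + b

/-- The execution of a deterministic distributed (full-sensing) algorithm `A` against the
1-activating injection pattern `a`; stations are identified with their activation rounds.
`(exec A a t).1 v` is the state of station `v` at the beginning of round `t`, and
`(exec A a t).2 v` the number of its pending packets at the beginning of round `t`. -/
def exec (A : Algo) (a : ℕ → ℕ) : ℕ → (ℕ → A.State) × (ℕ → ℕ)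
  | 0 => (fun _ => A.init, fun _ => 0)
  | t + 1 =>
    let st := (exec A a t).1
    let pend := (exec A a t).2
    let tx : Finset ℕ := (Finset.range t).filter fun v => 0 < pend v ∧ A.transmits (st v)
    let fb : ℕ → Feedback := fun v =>
      if tx.card = 0 then Feedback.silence
      else if tx.card = 1 then Feedback.heard (decide (v ∈ tx))
      else Feedback.collision
    (fun v => A.step (st v) (fb v) (decide (v = t ∧ a t ≠ 0)),
     fun v => (if v ∈ tx ∧ tx.card = 1 then pend v - 1 else pend v) + (if v = t then a t else 0))

namespace PF

/-- coordinate of a residual vector -/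
def g (r : List ℕ) (j : ℕ) : ℕ := r.getD j 0

def Sil (n : ℕ) (Q : ℕ → Prop) (r : List ℕ) : Prop := ∀ j < n, Q j → g r j = 0
def Non (n : ℕ) (Q : ℕ → Prop) (r : List ℕ) : Prop := ∃ j < n, Q j ∧ 0 < g r j
def Col (n : ℕ) (Q : ℕ → Prop) (r : List ℕ) : Prop :=
  ∃ i < n, ∃ j < n, i ≠ j ∧ Q i ∧ Q j ∧ 0 < g r i ∧ 0 < g r j
def Lone (n : ℕ) (Q : ℕ → Prop) (v : ℕ) (r : List ℕ) : Prop :=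
  0 < g r v ∧ ∀ j < n, j ≠ v → Q j → g r j = 0

def dec (v : ℕ) (r : List ℕ) : List ℕ := r.set v (g r v - 1)

theorem g_dec_ne {v j : ℕ} (r : List ℕ) (h : j ≠ v) : g (dec v r) j = g r j := by
  unfold g dec
  simp [List.getD_eq_getElem?_getD, List.getElem?_set, Ne.symm h]

theorem g_dec_self {v : ℕ} (r : List ℕ) : g (dec v r) v = g r v - 1 := by
  unfold g dec
  by_cases h : v < r.length
  · simp [List.getD_eq_getElem?_getD, List.getElem?_set, h, g]
  · simp [List.getD_eq_getElem?_getD, List.getElem?_set, h]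

def need (n : ℕ) (r : List ℕ) : ℕ := 2 * (∑ j ∈ Finset.range n, g r j) + g r n

def needB : ℕ → List ℕ → ℕ
  | 0, r => g r 0
  | _ + 1, [] => 0
  | n + 1, x :: r => 2 * x + needB n r

theorem needB_eq (n : ℕ) (r : List ℕ) : needB n r = need n r := by
  induction n generalizing r with
  | zero => cases r <;> simp [needB, need]
  | succ n ih =>
    cases r with
    | nil => simp [needB, need, g]
    | cons x r =>
      simp only [needB, ih, need]
      rw [Finset.sum_range_succ']
      simp only [g, List.getD_cons_succ, List.getD_cons_zero]
      ring

def tab2 : List (ℕ × List (List ℕ)) :=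
  [(3, [[0,1,0], [0,0,1]]),
   (5, [[1,1,0], [1,0,1]]),
   (5, [[0,2,0], [0,1,1]]),
   (6, [[2,0,0], [1,1,0], [0,2,0], [1,0,1], [0,1,1]])]

def tab4 : List (ℕ × List (List ℕ)) :=
  [(3, [[0,1,0,0,0], [0,0,0,0,1]]),
   (3, [[0,0,1,0,0], [0,0,0,0,1]]),
   (3, [[0,0,0,1,0], [0,0,0,0,1]]),
   (5, [[1,1,0,0,0], [1,0,0,0,1]]),
   (5, [[1,0,1,0,0], [1,0,0,0,1]]),
   (5, [[0,1,1,0,0], [0,1,0,0,1]]),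
   (5, [[0,1,1,0,0], [0,0,1,0,1]]),
   (5, [[1,0,0,1,0], [1,0,0,0,1]]),
   (5, [[0,1,0,1,0], [0,1,0,0,1]]),
   (5, [[0,1,0,1,0], [0,0,0,1,1]]),
   (5, [[0,0,1,1,0], [0,0,1,0,1]]),
   (5, [[0,0,1,1,0], [0,0,0,1,1]]),
   (6, [[1,1,0,0,0], [1,0,1,0,0], [0,1,1,0,0], [1,0,0,0,1], [0,1,0,0,1], [0,0,1,0,1]]),
   (6, [[1,1,0,0,0], [1,0,0,1,0], [0,1,0,1,0], [1,0,0,0,1], [0,1,0,0,1], [0,0,0,1,1]]),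
   (6, [[1,0,1,0,0], [1,0,0,1,0], [0,0,1,1,0], [1,0,0,0,1], [0,0,1,0,1], [0,0,0,1,1]]),
   (6, [[0,1,1,0,0], [0,1,0,1,0], [0,0,1,1,0], [0,1,0,0,1], [0,0,1,0,1], [0,0,0,1,1]]),
   (7, [[1,1,1,0,0], [1,1,0,0,1]]),
   (7, [[1,1,0,1,0], [1,0,0,1,1]]),
   (7, [[1,0,1,1,0], [1,0,1,0,1]]),
   (7, [[0,1,1,1,0], [0,1,1,0,1]]),
   (7, [[0,1,1,1,0], [0,1,0,1,1]]),
   (7, [[0,1,1,1,0], [0,0,1,1,1]]),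
   (8, [[1,1,1,0,0], [1,1,0,1,0], [1,0,1,1,0], [1,1,0,0,1], [1,0,1,0,1], [1,0,0,1,1]]),
   (8, [[1,1,1,0,0], [1,1,0,1,0], [0,1,1,1,0], [1,1,0,0,1], [0,1,1,0,1], [0,1,0,1,1]]),
   (8, [[1,1,1,0,0], [1,0,1,1,0], [0,1,1,1,0], [1,0,1,0,1], [0,1,1,0,1], [0,0,1,1,1]]),
   (8, [[1,1,0,1,0], [1,0,1,1,0], [0,1,1,1,0], [1,0,0,1,1], [0,1,0,1,1], [0,0,1,1,1]]),
   (9, [[1,1,1,0,0], [1,1,0,1,0], [1,0,1,1,0], [0,1,1,1,0], [1,1,0,0,1], [1,0,1,0,1], [0,1,1,0,1], [1,0,0,1,1], [0,1,0,1,1], [0,0,1,1,1]]),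
   (5, [[1,1,0,0,0], [1,0,1,0,0], [0,1,1,0,0]]),
   (5, [[1,1,0,0,0], [1,0,0,1,0], [0,1,0,1,0]]),
   (5, [[1,0,1,0,0], [1,0,0,1,0], [0,0,1,1,0]]),
   (5, [[0,1,1,0,0], [0,1,0,1,0], [0,0,1,1,0]]),
   (7, [[1,1,1,0,0], [1,1,0,1,0], [1,0,1,1,0]]),
   (7, [[1,1,1,0,0], [1,1,0,1,0], [0,1,1,1,0]]),
   (7, [[1,1,1,0,0], [1,0,1,1,0], [0,1,1,1,0]]),
   (7, [[1,1,0,1,0], [1,0,1,1,0], [0,1,1,1,0]]),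
   (8, [[1,1,1,0,0], [1,1,0,1,0], [1,0,1,1,0], [0,1,1,1,0]])]

def tab (n : ℕ) : List (ℕ × List (List ℕ)) := if n = 2 then tab2 else tab4

/-- winning positions of the adversary in one block -/
def W (n k : ℕ) (R : List (List ℕ)) : Prop :=
  (∃ r ∈ R, k ≤ need n r) ∨ ∃ e ∈ tab n, k ≤ e.1 ∧ ∀ r ∈ e.2, r ∈ R

def wB (n k : ℕ) (R : List (List ℕ)) : Bool :=
  R.any (fun r => decide (k ≤ needB n r)) ||
    (tab n).any (fun e => decide (k ≤ e.1) && e.2.all (fun r => R.contains r))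

theorem W_of_wB {n k : ℕ} {R : List (List ℕ)} (h : wB n k R = true) : W n k R := by
  unfold wB at h
  simp only [Bool.or_eq_true, List.any_eq_true, decide_eq_true_eq, Bool.and_eq_true,
    List.all_eq_true, List.contains_iff_mem, needB_eq] at h
  exact h

def actB (n q : ℕ) (r : List ℕ) : List ℕ :=
  (List.range n).filter (fun j => q.testBit j && decide (0 < g r j))

def sB (n q : ℕ) (R : List (List ℕ)) : List (List ℕ) := R.filter fun r => (actB n q r).length == 0
def nB (n q : ℕ) (R : List (List ℕ)) : List (List ℕ) := R.filter fun r => (actB n q r).length != 0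
def cB (n q : ℕ) (R : List (List ℕ)) : List (List ℕ) :=
  R.filter fun r => Nat.ble 2 (actB n q r).length
def hB (n q v : ℕ) (R : List (List ℕ)) : List (List ℕ) :=
  (R.filter fun r => actB n q r == [v]).map (dec v)

def respB (n k : ℕ) (R : List (List ℕ)) (q : ℕ) : Bool :=
  wB n (k - 2) (cB n q R) || wB n k (sB n q R) ||
    (R.all fun r => (actB n q r).length == 0) || (R.all fun r => Nat.ble 2 (actB n q r).length) ||
    ((wB n (k - 2) (sB n q R) || (List.range n).any fun v => wB n (k - 2) (hB n q v R)) &&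
      wB n (k - 1) (nB n q R))

def chk (n : ℕ) : Bool :=
  (tab n).all fun e =>
    (e.2.any fun r => (List.range n).any fun j => decide (0 < g r j)) &&
      (List.range (2 ^ n)).all fun q => respB n e.1 e.2 q

theorem chk2 : chk 2 = true := by decide +kernel
theorem chk4 : chk 4 = true := by decide +kernel

theorem mem_actB {n q j : ℕ} {r : List ℕ} :
    j ∈ actB n q r ↔ j < n ∧ q.testBit j = true ∧ 0 < g r j := by
  simp [actB]

theorem actB_nodup (n q : ℕ) (r : List ℕ) : (actB n q r).Nodup :=
  List.Nodup.filter _ List.nodup_range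

theorem sil_of {n q : ℕ} {Q : ℕ → Prop} {r : List ℕ} (hq : ∀ j < n, (q.testBit j = true ↔ Q j))
    (h : (actB n q r).length = 0) : Sil n Q r := by
  intro j hj hQ
  by_contra h0
  have : j ∈ actB n q r := mem_actB.2 ⟨hj, (hq j hj).2 hQ, Nat.pos_of_ne_zero h0⟩
  rw [List.length_eq_zero_iff] at h
  simp [h] at this

theorem non_of {n q : ℕ} {Q : ℕ → Prop} {r : List ℕ} (hq : ∀ j < n, (q.testBit j = true ↔ Q j))
    (h : (actB n q r).length ≠ 0) : Non n Q r := by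
  obtain ⟨j, hj⟩ := List.exists_mem_of_length_pos (Nat.pos_of_ne_zero h)
  obtain ⟨h1, h2, h3⟩ := mem_actB.1 hj
  exact ⟨j, h1, (hq j h1).1 h2, h3⟩

theorem col_of {n q : ℕ} {Q : ℕ → Prop} {r : List ℕ} (hq : ∀ j < n, (q.testBit j = true ↔ Q j))
    (h : 2 ≤ (actB n q r).length) : Col n Q r := by
  have hn := actB_nodup n q r
  have hm : ∀ j ∈ actB n q r, j < n ∧ q.testBit j = true ∧ 0 < g r j := fun j hj => mem_actB.1 hj
  match hl : actB n q r, h with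
  | x :: y :: l, _ =>
    rw [hl] at hn hm
    obtain ⟨h1, h2, h3⟩ := hm x (by simp)
    obtain ⟨h4, h5, h6⟩ := hm y (by simp)
    refine ⟨x, h1, y, h4, ?_, (hq x h1).1 h2, (hq y h4).1 h5, h3, h6⟩
    rintro rfl
    simp at hn

theorem lone_of {n q v : ℕ} {Q : ℕ → Prop} {r : List ℕ} (hq : ∀ j < n, (q.testBit j = true ↔ Q j))
    (h : actB n q r = [v]) : v < n ∧ Q v ∧ Lone n Q v r := by
  have hv : v ∈ actB n q r := by simp [h]
  obtain ⟨h1, h2, h3⟩ := mem_actB.1 hv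
  refine ⟨h1, (hq v h1).1 h2, h3, ?_⟩
  intro j hj hne hQ
  by_contra h0
  have : j ∈ actB n q r := mem_actB.2 ⟨hj, (hq j hj).2 hQ, Nat.pos_of_ne_zero h0⟩
  rw [h] at this
  simp at this
  exact hne this

theorem exists_mask (n : ℕ) (Q : ℕ → Prop) :
    ∃ q < 2 ^ n, ∀ j < n, (q.testBit j = true ↔ Q j) := by
  classical
  induction n with
  | zero => exact ⟨0, by simp, by simp⟩
  | succ n ih =>
    obtain ⟨q, hq, h⟩ := ih
    by_cases hn : Q n
    · refine ⟨2 ^ n + q, by rw [pow_succ]; omega, ?_⟩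
      intro j hj
      rcases Nat.lt_succ_iff_lt_or_eq.1 hj with hj | rfl
      · rw [Nat.testBit_two_pow_add_gt hj]; exact h j hj
      · rw [Nat.testBit_two_pow_add_eq]
        simp [Nat.testBit_lt_two_pow hq, hn]
    · refine ⟨q, by rw [pow_succ]; omega, ?_⟩
      intro j hj
      rcases Nat.lt_succ_iff_lt_or_eq.1 hj with hj | rfl
      · exact h j hj
      · simp [Nat.testBit_lt_two_pow hq, hn]

theorem W_mono {n k k' : ℕ} {R R' : List (List ℕ)} (h : W n k R) (hk : k' ≤ k)
    (hR : ∀ r ∈ R, r ∈ R') : W n k' R' := by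
  rcases h with ⟨r, hr, h⟩ | ⟨e, he, h, h2⟩
  · exact Or.inl ⟨r, hR r hr, hk.trans h⟩
  · exact Or.inr ⟨e, he, hk.trans h, fun r hr => hR r (h2 r hr)⟩

theorem W_zero {n : ℕ} {R : List (List ℕ)} {r : List ℕ} (h : r ∈ R) : W n 0 R :=
  Or.inl ⟨r, h, Nat.zero_le _⟩

def SilOpt (n k : ℕ) (R : List (List ℕ)) (Q : ℕ → Prop) : Prop :=
  ∃ R', W n k R' ∧ ∀ r ∈ R', r ∈ R ∧ Sil n Q r
def ColOpt (n k : ℕ) (R : List (List ℕ)) (Q : ℕ → Prop) : Prop :=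
  ∃ R', W n k R' ∧ ∀ r ∈ R', r ∈ R ∧ Col n Q r
def NonOpt (n k : ℕ) (R : List (List ℕ)) (Q : ℕ → Prop) : Prop :=
  ∃ R', W n k R' ∧ ∀ r ∈ R', r ∈ R ∧ Non n Q r
def HeaOpt (n k : ℕ) (R : List (List ℕ)) (Q : ℕ → Prop) : Prop :=
  ∃ v R', v < n ∧ Q v ∧ W n k R' ∧ ∀ r' ∈ R', ∃ r ∈ R, Lone n Q v r ∧ r' = dec v r

def Resp (n k : ℕ) (R : List (List ℕ)) (Q : ℕ → Prop) : Prop :=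
  ColOpt n (k - 2) R Q ∨ SilOpt n k R Q ∨
    ((SilOpt n (k - 2) R Q ∨ HeaOpt n (k - 2) R Q) ∧ NonOpt n (k - 1) R Q)

theorem chk_all {n : ℕ} (hn : n = 2 ∨ n = 4) : chk n = true := by
  rcases hn with rfl | rfl
  · exact chk2
  · exact chk4

theorem chk_entry {n : ℕ} (hn : n = 2 ∨ n = 4) {e : ℕ × List (List ℕ)} (he : e ∈ tab n) :
    (∃ r ∈ e.2, ∃ j < n, 0 < g r j) ∧ ∀ q < 2 ^ n, respB n e.1 e.2 q = true := by
  have h := chk_all hn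
  unfold chk at h
  rw [List.all_eq_true] at h
  have h1 := h e he
  simp only [Bool.and_eq_true, List.any_eq_true, List.all_eq_true, decide_eq_true_eq,
    List.mem_range] at h1
  exact h1

theorem need_dec {n v : ℕ} {r : List ℕ} (hv : v < n) (h0 : 0 < g r v) :
    need n (dec v r) + 2 = need n r := by
  unfold need
  rw [g_dec_ne r (by omega : n ≠ v)]
  have hm : v ∈ Finset.range n := by simpa using hv
  rw [← Finset.add_sum_erase _ _ hm, ← Finset.add_sum_erase _ (fun j => g r j) hm]
  have : ∑ x ∈ (Finset.range n).erase v, g (dec v r) x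
      = ∑ x ∈ (Finset.range n).erase v, g r x :=
    Finset.sum_congr rfl fun x hx => g_dec_ne r (Finset.ne_of_mem_erase hx)
  rw [this, g_dec_self]
  omega

theorem resp {n k : ℕ} {R : List (List ℕ)} (hn : n = 2 ∨ n = 4) (h : W n k R) (Q : ℕ → Prop) :
    Resp n k R Q := by
  classical
  obtain ⟨q, hq, hqQ⟩ := exists_mask n Q
  rcases h with ⟨r, hr, h⟩ | ⟨e, he, h, h2⟩
  · rcases Nat.lt_or_ge (actB n q r).length 2 with hl | hl
    · rcases Nat.eq_zero_or_pos (actB n q r).length with h0 | h0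
      · refine Or.inr (Or.inl ⟨[r], Or.inl ⟨r, by simp, h⟩, ?_⟩)
        intro x hx
        rw [List.mem_singleton] at hx
        subst hx
        exact ⟨hr, sil_of hqQ h0⟩
      · obtain ⟨v, hv⟩ := List.length_eq_one_iff.1 (by omega : (actB n q r).length = 1)
        obtain ⟨h1, h2, h3⟩ := lone_of hqQ hv
        refine Or.inr (Or.inr ⟨Or.inr ⟨v, [dec v r], h1, h2, Or.inl ⟨dec v r, by simp, ?_⟩, ?_⟩,
          [r], Or.inl ⟨r, by simp, by omega⟩, ?_⟩)
        · have := need_dec h1 h3.1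
          omega
        · intro x hx
          rw [List.mem_singleton] at hx
          exact ⟨r, hr, h3, hx⟩
        · intro x hx
          rw [List.mem_singleton] at hx
          subst hx
          exact ⟨hr, non_of hqQ (by omega)⟩
    · refine Or.inl ⟨[r], Or.inl ⟨r, by simp, by omega⟩, ?_⟩
      intro x hx
      rw [List.mem_singleton] at hx
      subst hx
      exact ⟨hr, col_of hqQ hl⟩
  · have hc := (chk_entry hn he).2 q hq
    have hS : ∀ k', W n k' (sB n q e.2) → SilOpt n k' R Q := by
      intro k' hw
      refine ⟨_, hw, ?_⟩
      intro x hx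
      simp only [sB, List.mem_filter, beq_iff_eq] at hx
      exact ⟨h2 x hx.1, sil_of hqQ hx.2⟩
    have hC : ∀ k', W n k' (cB n q e.2) → ColOpt n k' R Q := by
      intro k' hw
      refine ⟨_, hw, ?_⟩
      intro x hx
      simp only [cB, List.mem_filter, Nat.ble_eq] at hx
      exact ⟨h2 x hx.1, col_of hqQ hx.2⟩
    have hN : ∀ k', W n k' (nB n q e.2) → NonOpt n k' R Q := by
      intro k' hw
      refine ⟨_, hw, ?_⟩
      intro x hx
      simp only [nB, List.mem_filter, bne_iff_ne] at hx
      exact ⟨h2 x hx.1, non_of hqQ hx.2⟩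
    have hself : W n k e.2 := Or.inr ⟨e, he, h, fun r hr => hr⟩
    have mono : ∀ {k1 k2 : ℕ} {R1 : List (List ℕ)}, k2 ≤ k1 → wB n k1 R1 = true → W n k2 R1 :=
      fun hk hw => W_mono (W_of_wB hw) hk (fun r hr => hr)
    simp only [respB, Bool.or_eq_true, Bool.and_eq_true] at hc
    rcases hc with (((hc | hc) | hc) | hc) | hc
    · exact Or.inl (hC _ (mono (by omega) hc))
    · exact Or.inr (Or.inl (hS _ (mono h hc)))
    · refine Or.inr (Or.inl ⟨e.2, hself, ?_⟩)
      intro x hx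
      rw [List.all_eq_true] at hc
      exact ⟨h2 x hx, sil_of hqQ (by simpa using hc x hx)⟩
    · refine Or.inl ⟨e.2, W_mono hself (by omega) (fun r hr => hr), ?_⟩
      intro x hx
      rw [List.all_eq_true] at hc
      exact ⟨h2 x hx, col_of hqQ (by simpa using hc x hx)⟩
    · refine Or.inr (Or.inr ⟨?_, hN _ (mono (by omega) hc.2)⟩)
      rcases hc.1 with hc | hc
      · exact Or.inl (hS _ (mono (by omega) hc))
      · right
        rw [List.any_eq_true] at hc
        obtain ⟨v, hv, hw⟩ := hc
        have hw' : W n (k - 2) (hB n q v e.2) := mono (by omega) hw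
        have key : ∀ r' ∈ hB n q v e.2, v < n ∧ Q v ∧ ∃ r ∈ R, Lone n Q v r ∧ r' = dec v r := by
          intro r' hr'
          simp only [hB, List.mem_map, List.mem_filter, beq_iff_eq] at hr'
          obtain ⟨r, ⟨hr, ha⟩, rfl⟩ := hr'
          obtain ⟨h1, h3, h4⟩ := lone_of hqQ ha
          exact ⟨h1, h3, r, h2 r hr, h4, rfl⟩
        have hne : ∃ r', r' ∈ hB n q v e.2 := by
          rcases hw' with ⟨r, hr, _⟩ | ⟨e', he', _, h5⟩
          · exact ⟨r, hr⟩
          · obtain ⟨⟨r, hr, _⟩, _⟩ := chk_entry hn he'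
            exact ⟨r, h5 r hr⟩
        obtain ⟨r', hr'⟩ := hne
        obtain ⟨h1, h3, _⟩ := key r' hr'
        exact ⟨v, _, h1, h3, hw', fun r' hr' => (key r' hr').2.2⟩

theorem W_ne {n k : ℕ} {R : List (List ℕ)} (hn : n = 2 ∨ n = 4) (h : W n k R) : ∃ r, r ∈ R := by
  rcases h with ⟨r, hr, _⟩ | ⟨e', he', _, h5⟩
  · exact ⟨r, hr⟩
  · obtain ⟨⟨r, hr, _⟩, _⟩ := chk_entry hn he'
    exact ⟨r, h5 r hr⟩

theorem W_closed {n k : ℕ} {R : List (List ℕ)} (hn : n = 2 ∨ n = 4) (h : W n k R)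
    (h0 : ∀ r ∈ R, ∀ j < n, g r j = 0) : ∃ r ∈ R, k ≤ g r n := by
  rcases h with ⟨r, hr, hk⟩ | ⟨e', he', _, h5⟩
  · refine ⟨r, hr, hk.trans ?_⟩
    unfold need
    rw [Finset.sum_eq_zero (fun j hj => h0 r hr j (by simpa using hj))]
    simp
  · obtain ⟨⟨r, hr, j, hj, hp⟩, _⟩ := chk_entry hn he'
    have := h0 r (h5 r hr) j hj
    omega


/-! ### Channel histories -/

/-- label of a round: silence, collision, or station `v` heard -/
inductive Lab where
  | S : Lab
  | C : Lab
  | H : ℕ → Lab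

def fbk : Lab → ℕ → Feedback
  | Lab.S, _ => Feedback.silence
  | Lab.C, _ => Feedback.collision
  | Lab.H u, v => Feedback.heard (decide (v = u))

/-- virtual state of station `v` after history `h` (newest first), if it is activated -/
def sv (A : Algo) : List Lab → ℕ → A.State
  | [], _ => A.init
  | l :: h, v => A.step (sv A h v) (fbk l v) (decide (v = h.length))

def hit : Lab → ℕ → ℕ
  | Lab.S, _ => 0
  | Lab.C, _ => 0
  | Lab.H u, v => if v = u then 1 else 0

/-- number of packets of `v` heard in history `h` -/
def cnt : List Lab → ℕ → ℕ
  | [], _ => 0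
  | l :: h, v => cnt h v + hit l v

def Query (A : Algo) (h : List Lab) (v : ℕ) : Prop :=
  v < h.length ∧ A.transmits (sv A h v) = true

def ConsL (A : Algo) (a : ℕ → ℕ) (h : List Lab) : Lab → Prop
  | Lab.S => ∀ v, Query A h v → a v ≤ cnt h v
  | Lab.C => ∃ u v, u ≠ v ∧ Query A h u ∧ Query A h v ∧ cnt h u < a u ∧ cnt h v < a v
  | Lab.H u => Query A h u ∧ cnt h u < a u ∧ ∀ v, v ≠ u → Query A h v → a v ≤ cnt h v

def Cons (A : Algo) (a : ℕ → ℕ) : List Lab → Prop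
  | [] => True
  | l :: h => Cons A a h ∧ ConsL A a h l

def txs (A : Algo) (a : ℕ → ℕ) (t : ℕ) : Finset ℕ :=
  (Finset.range t).filter fun v => 0 < (exec A a t).2 v ∧ A.transmits ((exec A a t).1 v)

theorem exec_st (A : Algo) (a : ℕ → ℕ) (t v : ℕ) :
    (exec A a (t + 1)).1 v = A.step ((exec A a t).1 v)
      (if (txs A a t).card = 0 then Feedback.silence
      else if (txs A a t).card = 1 then Feedback.heard (decide (v ∈ txs A a t))
      else Feedback.collision) (decide (v = t ∧ a t ≠ 0)) := rfl

theorem exec_pend (A : Algo) (a : ℕ → ℕ) (t v : ℕ) :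
    (exec A a (t + 1)).2 v = (if v ∈ txs A a t ∧ (txs A a t).card = 1
      then (exec A a t).2 v - 1 else (exec A a t).2 v) + (if v = t then a t else 0) := rfl

theorem pend_anti (A : Algo) (a : ℕ → ℕ) {v t : ℕ} (hv : v < t) (d : ℕ) :
    (exec A a (t + d)).2 v ≤ (exec A a t).2 v := by
  induction d with
  | zero => exact le_refl _
  | succ d ih =>
    rw [← Nat.add_assoc, exec_pend]
    rw [if_neg (by omega : ¬ v = t + d)]
    split_ifs <;> omega

theorem exec_hist (A : Algo) (a : ℕ → ℕ) (h : List Lab) (hc : Cons A a h) :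
    (∀ v, h.length ≤ v → cnt h v = 0) ∧
    (∀ v, (exec A a h.length).2 v = if v < h.length then a v - cnt h v else 0) ∧
    (∀ v, a v ≠ 0 ∨ h.length ≤ v → (exec A a h.length).1 v = sv A h v) := by
  induction h with
  | nil => simp [exec, cnt, sv]
  | cons l h ih =>
    obtain ⟨h1, h2⟩ := hc
    obtain ⟨c0, hp, hs⟩ := ih h1
    have mem : ∀ v, v ∈ txs A a h.length ↔ Query A h v ∧ cnt h v < a v := by
      intro v
      simp only [txs, Finset.mem_filter, Finset.mem_range, hp, Query]
      constructor
      · rintro ⟨h3, h4, h5⟩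
        rw [if_pos h3] at h4
        rw [hs v (Or.inl (by omega))] at h5
        exact ⟨⟨h3, h5⟩, by omega⟩
      · rintro ⟨⟨h3, h5⟩, h4⟩
        rw [if_pos h3, hs v (Or.inl (by omega))]
        exact ⟨h3, by omega, h5⟩
    -- the actual feedback agrees with the label
    have hfb : (∀ v, (if (txs A a h.length).card = 0 then Feedback.silence
        else if (txs A a h.length).card = 1 then Feedback.heard (decide (v ∈ txs A a h.length))
        else Feedback.collision) = fbk l v) ∧
        (∀ v, (if v ∈ txs A a h.length ∧ (txs A a h.length).card = 1 then 1 else 0) = hit l v) := by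
      cases l with
      | S =>
        have : txs A a h.length = ∅ := by
          ext v
          rw [mem]
          simp only [Finset.notMem_empty, iff_false, not_and, not_lt]
          exact h2 v
        simp [this, fbk, hit]
      | C =>
        obtain ⟨u, v, huv, q1, q2, c1, c2⟩ := h2
        have : 1 < (txs A a h.length).card :=
          Finset.one_lt_card.2 ⟨u, (mem u).2 ⟨q1, c1⟩, v, (mem v).2 ⟨q2, c2⟩, huv⟩
        have e1 : ¬ (txs A a h.length).card = 0 := by omega
        have e2 : ¬ (txs A a h.length).card = 1 := by omega
        simp [e1, e2, fbk, hit]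
      | H u =>
        obtain ⟨q1, c1, ho⟩ := h2
        have : txs A a h.length = {u} := by
          ext v
          rw [mem, Finset.mem_singleton]
          constructor
          · rintro ⟨q, c⟩
            by_contra hne
            have := ho v hne q
            omega
          · rintro rfl
            exact ⟨q1, c1⟩
        simp [this, fbk, hit]
    have hit0 : ∀ v, h.length ≤ v → hit l v = 0 := by
      intro v hv
      rw [← hfb.2 v, if_neg]
      rintro ⟨h3, _⟩
      have := ((mem v).1 h3).1.1
      omega
    have c0' : ∀ v, h.length ≤ v → cnt (l :: h) v = 0 := by
      intro v hv
      simp only [cnt, c0 v hv, hit0 v hv]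
    refine ⟨fun v hv => c0' v (by simp at hv; omega), ?_, ?_⟩
    · intro v
      rw [List.length_cons, exec_pend, hp]
      have h3 := hfb.2 v
      by_cases hv : v = h.length
      · subst hv
        have h4 := c0' _ (le_refl h.length)
        simp [h4]
      · by_cases hv2 : v < h.length
        · rw [if_pos (by omega : v < h.length + 1)]
          simp only [hv, hv2, if_true, if_false, cnt]
          rw [← h3]
          split_ifs <;> omega
        · rw [if_neg (by omega : ¬ v < h.length + 1)]
          simp [hv, hv2]
    · intro v hv
      rw [List.length_cons, exec_st, hfb.1 v]
      simp only [List.length_cons] at hv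
      rw [hs v (by omega)]
      simp only [sv]
      congr 1
      by_cases hv1 : v = h.length
      · subst hv1
        simp
        omega
      · simp [hv1]

/-! ### Levels -/

def lev (a : ℕ → ℕ) : ℕ → ℕ
  | 0 => 0
  | t + 1 => lev a t + 4 * a t - 3

theorem lev_sum (a : ℕ → ℕ) (s n : ℕ) :
    4 * ∑ t ∈ Finset.Ico s (s + n), a t ≤ 3 * n + lev a (s + n) := by
  induction n with
  | zero => simp
  | succ n ih =>
    rw [← Nat.add_assoc, Finset.sum_Ico_succ_top (by omega)]
    simp only [lev]
    omega

theorem adm_of_lev {a : ℕ → ℕ} (h : ∀ t, lev a t ≤ 8) : Admissible (3/4) 2 a := by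
  intro s n
  have h1 := lev_sum a s n
  have h2 := h (s + n)
  have h3 : 4 * ∑ t ∈ Finset.Ico s (s + n), a t ≤ 3 * n + 8 := by omega
  have h4 : (4 : ℝ) * ((∑ t ∈ Finset.Ico s (s + n), a t : ℕ) : ℝ) ≤ 3 * n + 8 := by
    exact_mod_cast h3
  push_cast at h4 ⊢
  linarith

theorem lev_tail {a : ℕ → ℕ} {e : ℕ} (h : ∀ v ≤ e, lev a v ≤ 8) (h0 : ∀ v, e ≤ v → a v = 0) :
    ∀ t, lev a t ≤ 8 := by
  intro t
  induction t with
  | zero => simp [lev]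
  | succ t ih =>
    by_cases ht : t + 1 ≤ e
    · exact h _ ht
    · simp only [lev]
      rw [h0 t (by omega)]
      omega


/-! ### The board of blocks -/

def off (N : ℕ → ℕ) (i : ℕ) : ℕ := ∑ j ∈ Finset.range i, N j

theorem off_succ (N : ℕ → ℕ) (i : ℕ) : off N (i + 1) = off N i + N i := by
  simp [off, Finset.sum_range_succ]

theorem off_mono (N : ℕ → ℕ) {i j : ℕ} (h : i ≤ j) : off N i ≤ off N j := by
  induction h with
  | refl => exact le_refl _
  | step _ ih => rw [off_succ]; omega

theorem off_congr {N N' : ℕ → ℕ} {m : ℕ} (h : ∀ i < m, N' i = N i) {i : ℕ} (hi : i ≤ m) :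
    off N' i = off N i := by
  unfold off
  apply Finset.sum_congr rfl
  intro j hj
  exact h j (by simp at hj; omega)

theorem off_split (N : ℕ → ℕ) (m v : ℕ) (h : v < off N m) :
    ∃ i < m, ∃ j < N i, v = off N i + j := by
  induction m with
  | zero => simp [off] at h
  | succ m ih =>
    by_cases hv : v < off N m
    · obtain ⟨i, hi, r⟩ := ih hv
      exact ⟨i, by omega, r⟩
    · rw [off_succ] at h
      exact ⟨m, by omega, v - off N m, by omega, by omega⟩

theorem off_inj (N : ℕ → ℕ) {i j i' j' : ℕ} (hj : j < N i) (hj' : j' < N i')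
    (h : off N i + j = off N i' + j') : i = i' ∧ j = j' := by
  rcases Nat.lt_trichotomy i i' with h1 | h1 | h1
  · have := off_mono N (Nat.succ_le_of_lt h1)
    rw [Nat.succ_eq_add_one, off_succ] at this
    omega
  · subst h1
    exact ⟨rfl, by omega⟩
  · have := off_mono N (Nat.succ_le_of_lt h1)
    rw [Nat.succ_eq_add_one, off_succ] at this
    omega

theorem off_ge {N : ℕ → ℕ} (hN : ∀ i, N i = 2 ∨ N i = 4) (i d : ℕ) : off N i + d ≤ off N (i + d) := by
  induction d with
  | zero => simp
  | succ d ih =>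
    rw [← Nat.add_assoc, ← Nat.add_assoc, off_succ]
    have := hN (i + d)
    omega

def Compat (N : ℕ → ℕ) (m : ℕ) (c : ℕ → ℕ) (w : ℕ → List ℕ) (a : ℕ → ℕ) : Prop :=
  ∀ i < m, ∀ j < N i, a (off N i + j) = g (w i) j + c (off N i + j)

theorem exists_compat (N : ℕ → ℕ) (m : ℕ) (c : ℕ → ℕ) (w : ℕ → List ℕ) :
    ∃ a, Compat N m c w a ∧ ∀ v, off N m ≤ v → a v = 0 := by
  induction m with
  | zero => exact ⟨fun _ => 0, fun i hi => by omega, fun _ _ => rfl⟩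
  | succ m ih =>
    obtain ⟨a, ha, _⟩ := ih
    refine ⟨fun v => if v < off N m then a v else
      if v < off N (m + 1) then g (w m) (v - off N m) + c v else 0, ?_, ?_⟩
    · intro i hi j hj
      by_cases him : i = m
      · subst him
        have : off N i + j < off N (i + 1) := by rw [off_succ]; omega
        simp [this]
      · have h1 := off_mono N (by omega : i + 1 ≤ m)
        rw [off_succ] at h1
        simp only [(by omega : off N i + j < off N m), if_true]
        exact ha i (by omega) j hj
    · intro v hv
      have := off_mono N (by omega : m ≤ m + 1)
      beta_reduce
      rw [if_neg (by omega), if_neg (by omega)]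

structure Inv (A : Algo) (N : ℕ → ℕ) (m : ℕ) (P : (ℕ → ℕ) → (ℕ → ℕ) → Prop)
    (h : List Lab) (R : ℕ → List (List ℕ)) (k : ℕ → ℕ) : Prop where
  win : ∀ i < m, W (N i) (k i) (R i)
  len : h.length ≤ off N m
  c0 : ∀ v, h.length ≤ v → cnt h v = 0
  play : ∀ w a, (∀ i < m, w i ∈ R i) → Compat N m (cnt h) w a →
    Cons A a h ∧ P (fun i => g (w i) (N i)) a

section Round

variable {A : Algo} {N : ℕ → ℕ} {m : ℕ} {P : (ℕ → ℕ) → (ℕ → ℕ) → Prop}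
  {h : List Lab} {R : ℕ → List (List ℕ)} {k : ℕ → ℕ}

theorem stepS (I : Inv A N m P h R k) (hl : h.length < off N m) (k' : ℕ → ℕ)
    (hS : ∀ i, i < m → SilOpt (N i) (k' i) (R i) (fun j => Query A h (off N i + j))) :
    ∃ R', Inv A N m P (Lab.S :: h) R' k' := by
  choose! R' hW hR using hS
  refine ⟨R', hW, by simpa using hl, ?_, ?_⟩
  · intro v hv
    simp only [List.length_cons] at hv
    simp [cnt, hit, I.c0 v (by omega)]
  · intro w a hw hc
    have hc' : Compat N m (cnt h) w a := by simpa [Compat, cnt, hit] using hc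
    obtain ⟨h1, h2⟩ := I.play w a (fun i hi => (hR i hi _ (hw i hi)).1) hc'
    refine ⟨⟨h1, ?_⟩, h2⟩
    intro v hv
    obtain ⟨i, hi, j, hj, rfl⟩ := off_split N m v (by have := hv.1; omega)
    have h3 := (hR i hi _ (hw i hi)).2 j hj hv
    have h4 := hc' i hi j hj
    omega

theorem stepC (I : Inv A N m P h R k) (hl : h.length < off N m) (k' : ℕ → ℕ)
    (R' : ℕ → List (List ℕ)) (hW : ∀ i < m, W (N i) (k' i) (R' i))
    (hR : ∀ i < m, ∀ r ∈ R' i, r ∈ R i)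
    (hcol : ∀ w : ℕ → List ℕ, (∀ i < m, w i ∈ R' i) → ∃ i < m, ∃ j < N i, ∃ i' < m, ∃ j' < N i',
      off N i + j ≠ off N i' + j' ∧ Query A h (off N i + j) ∧ Query A h (off N i' + j') ∧
      0 < g (w i) j ∧ 0 < g (w i') j') :
    Inv A N m P (Lab.C :: h) R' k' := by
  refine ⟨hW, by simpa using hl, ?_, ?_⟩
  · intro v hv
    simp only [List.length_cons] at hv
    simp [cnt, hit, I.c0 v (by omega)]
  · intro w a hw hc
    have hc' : Compat N m (cnt h) w a := by simpa [Compat, cnt, hit] using hc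
    obtain ⟨h1, h2⟩ := I.play w a (fun i hi => hR i hi _ (hw i hi)) hc'
    refine ⟨⟨h1, ?_⟩, h2⟩
    obtain ⟨i, hi, j, hj, i', hi', j', hj', hne, q1, q2, p1, p2⟩ := hcol w hw
    have h4 := hc' i hi j hj
    have h5 := hc' i' hi' j' hj'
    exact ⟨_, _, hne, q1, q2, by omega, by omega⟩

theorem stepH (I : Inv A N m P h R k) (hl : h.length < off N m) (k' : ℕ → ℕ) (i0 : ℕ)
    (hi0 : i0 < m)
    (hH : HeaOpt (N i0) (k' i0) (R i0) (fun j => Query A h (off N i0 + j)))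
    (hS : ∀ i, i < m → i ≠ i0 → SilOpt (N i) (k' i) (R i) (fun j => Query A h (off N i + j))) :
    ∃ l R', Inv A N m P (l :: h) R' k' := by
  obtain ⟨u, R0, hu, hQ, hW0, hR0⟩ := hH
  choose! R1 hW hR using hS
  refine ⟨Lab.H (off N i0 + u), Function.update R1 i0 R0, ?_, by simpa using hl, ?_, ?_⟩
  · intro i hi
    by_cases hii : i = i0
    · subst hii; simpa using hW0
    · simpa [hii] using hW i hi hii
  · intro v hv
    have := hQ.1
    simp only [List.length_cons] at hv
    simp only [cnt, hit, I.c0 v (by omega), if_neg (by omega : ¬ v = off N i0 + u)]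
  · intro w a hw hc
    have h0 := hw i0 hi0
    rw [Function.update_self] at h0
    obtain ⟨r, hr, hlone, hwr⟩ := hR0 _ h0
    have hw' : ∀ i < m, i ≠ i0 → w i ∈ R1 i := by
      intro i hi hii
      have := hw i hi
      rwa [Function.update_of_ne hii] at this
    have hc' : Compat N m (cnt h) (Function.update w i0 r) a := by
      intro i hi j hj
      have h1 := hc i hi j hj
      simp only [cnt, hit] at h1
      by_cases hii : i = i0
      · subst hii
        rw [Function.update_self]
        by_cases hju : j = u
        · subst hju
          rw [hwr, g_dec_self, if_pos rfl] at h1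
          have := hlone.1
          omega
        · rw [hwr, g_dec_ne r hju, if_neg (by omega)] at h1
          omega
      · rw [Function.update_of_ne hii]
        rw [if_neg (fun h2 => hii (off_inj N hj hu h2).1)] at h1
        omega
    obtain ⟨h1, h2⟩ := I.play _ a (by
      intro i hi
      by_cases hii : i = i0
      · subst hii; simpa using hr
      · rw [Function.update_of_ne hii]
        exact (hR i hi hii _ (hw' i hi hii)).1) hc'
    refine ⟨⟨h1, hQ, ?_, ?_⟩, ?_⟩
    · have h3 := hc' i0 hi0 u hu
      rw [Function.update_self] at h3
      have := hlone.1
      omega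
    · intro v hvu hv
      obtain ⟨i, hi, j, hj, rfl⟩ := off_split N m v (by have := hv.1; omega)
      have h4 := hc' i hi j hj
      by_cases hii : i = i0
      · subst hii
        rw [Function.update_self] at h4
        have h5 := hlone.2 j hj (by rintro rfl; exact hvu rfl) hv
        omega
      · rw [Function.update_of_ne hii] at h4
        have h5 := (hR i hi hii _ (hw' i hi hii)).2 j hj hv
        omega
    · have : (fun i => g (w i) (N i)) = fun i => g (Function.update w i0 r i) (N i) := by
        funext i
        by_cases hii : i = i0
        · subst hii
          rw [Function.update_self, hwr, g_dec_ne r (by omega)]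
        · rw [Function.update_of_ne hii]
      rw [this]
      exact h2

theorem sum_drop {m : ℕ} {k k' : ℕ → ℕ} (i0 i1 : ℕ)
    (hk : ∀ i, k i ≤ k' i + ((if i = i0 then 1 else 0) + (if i = i1 then 1 else 0))) :
    ∑ i ∈ Finset.range m, k i ≤ ∑ i ∈ Finset.range m, k' i + 2 := by
  refine (Finset.sum_le_sum fun i _ => hk i).trans ?_
  rw [Finset.sum_add_distrib, Finset.sum_add_distrib, Finset.sum_ite_eq', Finset.sum_ite_eq']
  split_ifs <;> omega

theorem round1 (hN : ∀ i, N i = 2 ∨ N i = 4) (I : Inv A N m P h R k) (hl : h.length < off N m) :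
    ∃ l R' k', Inv A N m P (l :: h) R' k' ∧
      ∑ i ∈ Finset.range m, k i ≤ ∑ i ∈ Finset.range m, k' i + 2 ∧ ∀ i, k' i ≤ k i := by
  classical
  have hresp : ∀ i, i < m → Resp (N i) (k i) (R i) (fun j => Query A h (off N i + j)) :=
    fun i hi => resp (hN i) (I.win i hi) _
  by_cases hcol : ∃ i, i < m ∧ ColOpt (N i) (k i - 2) (R i) (fun j => Query A h (off N i + j))
  · obtain ⟨i0, hi0, R0, hW0, hR0⟩ := hcol
    refine ⟨Lab.C, Function.update R i0 R0, Function.update k i0 (k i0 - 2),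
      stepC I hl _ _ ?_ ?_ ?_, sum_drop i0 i0 ?_, ?_⟩
    · intro i hi
      by_cases hii : i = i0
      · subst hii; simpa using hW0
      · simpa [hii] using I.win i hi
    · intro i hi r hr
      by_cases hii : i = i0
      · subst hii
        rw [Function.update_self] at hr
        exact (hR0 r hr).1
      · rwa [Function.update_of_ne hii] at hr
    · intro w hw
      have h0 := hw i0 hi0
      rw [Function.update_self] at h0
      obtain ⟨x, hx, y, hy, hxy, qx, qy, px, py⟩ := (hR0 _ h0).2
      exact ⟨i0, hi0, x, hx, i0, hi0, y, hy, by omega, qx, qy, px, py⟩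
    · intro i
      by_cases hii : i = i0
      · subst hii; simp; omega
      · simp [hii]
    · intro i
      by_cases hii : i = i0
      · subst hii; simp
      · simp [hii]
  · by_cases hsil : ∀ i, i < m → SilOpt (N i) (k i) (R i) (fun j => Query A h (off N i + j))
    · obtain ⟨R', hI⟩ := stepS I hl k hsil
      exact ⟨_, R', k, hI, by omega, fun _ => le_refl _⟩
    · push Not at hsil hcol
      obtain ⟨i0, hi0, hs0⟩ := hsil
      have third : ∀ i, i < m → ¬ SilOpt (N i) (k i) (R i) (fun j => Query A h (off N i + j)) →
          (SilOpt (N i) (k i - 2) (R i) (fun j => Query A h (off N i + j)) ∨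
            HeaOpt (N i) (k i - 2) (R i) (fun j => Query A h (off N i + j))) ∧
          NonOpt (N i) (k i - 1) (R i) (fun j => Query A h (off N i + j)) := by
        intro i hi hs
        rcases hresp i hi with h1 | h1 | h1
        · exact absurd h1 (hcol i hi)
        · exact absurd h1 hs
        · exact h1
      by_cases htwo : ∃ i1, i1 < m ∧ i1 ≠ i0 ∧
          ¬ SilOpt (N i1) (k i1) (R i1) (fun j => Query A h (off N i1 + j))
      · obtain ⟨i1, hi1, hne, hs1⟩ := htwo
        obtain ⟨R0, hW0, hR0⟩ := (third i0 hi0 hs0).2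
        obtain ⟨R1, hW1, hR1⟩ := (third i1 hi1 hs1).2
        refine ⟨Lab.C, Function.update (Function.update R i0 R0) i1 R1,
          Function.update (Function.update k i0 (k i0 - 1)) i1 (k i1 - 1),
          stepC I hl _ _ ?_ ?_ ?_, sum_drop i0 i1 ?_, ?_⟩
        · intro i hi
          by_cases hi1' : i = i1
          · subst hi1'; simpa using hW1
          · by_cases hii : i = i0
            · subst hii; simpa [hi1'] using hW0
            · simpa [hii, hi1'] using I.win i hi
        · intro i hi r hr
          by_cases hi1' : i = i1
          · subst hi1'
            rw [Function.update_self] at hr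
            exact (hR1 r hr).1
          · rw [Function.update_of_ne hi1'] at hr
            by_cases hii : i = i0
            · subst hii
              rw [Function.update_self] at hr
              exact (hR0 r hr).1
            · rwa [Function.update_of_ne hii] at hr
        · intro w hw
          have h0 := hw i0 hi0
          rw [Function.update_of_ne (Ne.symm hne), Function.update_self] at h0
          have h1 := hw i1 hi1
          rw [Function.update_self] at h1
          obtain ⟨x, hx, qx, px⟩ := (hR0 _ h0).2
          obtain ⟨y, hy, qy, py⟩ := (hR1 _ h1).2
          exact ⟨i0, hi0, x, hx, i1, hi1, y, hy,
            fun e => hne (off_inj N hx hy e).1.symm, qx, qy, px, py⟩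
        · intro i
          by_cases hi1' : i = i1
          · subst hi1'; simp; omega
          · by_cases hii : i = i0
            · subst hii; simp [hi1']; omega
            · simp [hii, hi1']
        · intro i
          by_cases hi1' : i = i1
          · subst hi1'; simp
          · by_cases hii : i = i0
            · subst hii; simp [hi1']
            · simp [hii, hi1']
      · push Not at htwo
        have hk1 : ∀ i, k i ≤ Function.update k i0 (k i0 - 2) i +
            ((if i = i0 then 1 else 0) + (if i = i0 then 1 else 0)) := by
          intro i
          by_cases hii : i = i0
          · subst hii; simp; omega
          · simp [hii]
        have hk2 : ∀ i, Function.update k i0 (k i0 - 2) i ≤ k i := by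
          intro i
          by_cases hii : i = i0
          · subst hii; simp
          · simp [hii]
        rcases (third i0 hi0 hs0).1 with h1 | h1
        · obtain ⟨R', hI⟩ := stepS I hl (Function.update k i0 (k i0 - 2)) (by
            intro i hi
            by_cases hii : i = i0
            · subst hii; simpa using h1
            · simpa [hii] using htwo i hi hii)
          exact ⟨_, R', _, hI, sum_drop i0 i0 hk1, hk2⟩
        · obtain ⟨l, R', hI⟩ := stepH I hl (Function.update k i0 (k i0 - 2)) i0 hi0
            (by simpa using h1) (by
              intro i hi hii
              simpa [hii] using htwo i hi hii)
          exact ⟨_, R', _, hI, sum_drop i0 i0 hk1, hk2⟩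

theorem rounds (hN : ∀ i, N i = 2 ∨ N i = 4) (n : ℕ) (I : Inv A N m P h R k)
    (hl : h.length + n ≤ off N m) :
    ∃ h' R' k', Inv A N m P h' R' k' ∧ h'.length = h.length + n ∧
      ∑ i ∈ Finset.range m, k i ≤ ∑ i ∈ Finset.range m, k' i + 2 * n ∧ ∀ i, k' i ≤ k i := by
  induction n with
  | zero => exact ⟨h, R, k, I, rfl, by omega, fun _ => le_refl _⟩
  | succ n ih =>
    obtain ⟨h1, R1, k1, I1, l1, s1, d1⟩ := ih (by omega)
    obtain ⟨l, R2, k2, I2, s2, d2⟩ := round1 hN I1 (by omega)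
    refine ⟨l :: h1, R2, k2, I2, by simp; omega, by omega, fun i => (d2 i).trans (d1 i)⟩

theorem pick (hN : ∀ i, N i = 2 ∨ N i = 4) (I : Inv A N m P h R k) {i0 : ℕ} (hi0 : i0 < m)
    {r : List ℕ} (hr : r ∈ R i0) :
    ∃ w a, w i0 = r ∧ (∀ i < m, w i ∈ R i) ∧ Compat N m (cnt h) w a ∧
      ∀ v, off N m ≤ v → a v = 0 := by
  classical
  have hne : ∀ i, i < m → ∃ r, r ∈ R i := fun i hi => W_ne (hN i) (I.win i hi)
  choose! w0 hw0 using hne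
  obtain ⟨a, ha, ha0⟩ := exists_compat N m (cnt h) (Function.update w0 i0 r)
  refine ⟨Function.update w0 i0 r, a, by simp, ?_, ha, ha0⟩
  intro i hi
  by_cases hii : i = i0
  · subst hii; simpa using hr
  · simpa [hii] using hw0 i hi

/-- bounded latency of the algorithm -/
def Lat (A : Algo) (T : ℕ) : Prop :=
  ∀ a, Admissible (3/4) 2 a → ∀ v, 0 < a v → (exec A a (v + T + 1)).2 v = 0

theorem closed {T : ℕ} (hT : Lat A T) (hN : ∀ i, N i = 2 ∨ N i = 4) (I : Inv A N m P h R k)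
    (hP : ∀ τ a, P τ a → ∀ v, v ≤ off N m → lev a v ≤ 8) {i0 : ℕ} (hi0 : i0 < m)
    (hlen : off N (i0 + 1) + T ≤ h.length) :
    ∀ r ∈ R i0, ∀ j < N i0, g r j = 0 := by
  intro r hr j hj
  obtain ⟨w, a, hw0, hw, hc, ha0⟩ := pick hN I hi0 hr
  obtain ⟨hcons, hPa⟩ := I.play w a hw hc
  have hadm := adm_of_lev (lev_tail (hP _ _ hPa) ha0)
  have h1 := hc i0 hi0 j hj
  rw [hw0] at h1
  rw [off_succ] at hlen
  rcases Nat.eq_zero_or_pos (a (off N i0 + j)) with hz | hp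
  · omega
  · have h2 := hT a hadm _ hp
    have h3 := pend_anti A a (v := off N i0 + j) (t := off N i0 + j + T + 1) (by omega)
      (h.length - (off N i0 + j + T + 1))
    rw [h2, Nat.add_sub_cancel' (by omega)] at h3
    have h4 := (exec_hist A a h hcons).2.1 (off N i0 + j)
    rw [if_pos (by omega)] at h4
    omega

theorem addBlock (hN : ∀ i, N i = 2 ∨ N i = 4) (I : Inv A N m P h R k)
    (hl : h.length = off N m) {n kn : ℕ} (hn : n = 2 ∨ n = 4) {Rn : List (List ℕ)}
    (hW : W n kn Rn) (P' : (ℕ → ℕ) → (ℕ → ℕ) → Prop)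
    (hP : ∀ τ τ' a, P τ a → (∀ i < m, τ' i = τ i) →
      (∃ r ∈ Rn, τ' m = g r n ∧ ∀ j < n, a (off N m + j) = g r j) → P' τ' a) :
    (∀ i, Function.update N m n i = 2 ∨ Function.update N m n i = 4) ∧
    Inv A (Function.update N m n) (m + 1) P' h (Function.update R m Rn)
      (Function.update k m kn) ∧
    off (Function.update N m n) m = off N m ∧
    off (Function.update N m n) (m + 1) = off N m + n ∧
    ∑ i ∈ Finset.range (m + 1), Function.update k m kn i = ∑ i ∈ Finset.range m, k i + kn := by
  have hU : ∀ {α : Type} (f : ℕ → α) (x : α), ∀ i < m, Function.update f m x i = f i :=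
    fun f x i hi => Function.update_of_ne (by omega) _ _
  have ho : ∀ i, i ≤ m → off (Function.update N m n) i = off N i :=
    fun i hi => off_congr (hU N n) hi
  have ho1 : off (Function.update N m n) (m + 1) = off N m + n := by
    rw [off_succ, ho m (le_refl _), Function.update_self]
  refine ⟨?_, ⟨?_, by omega, I.c0, ?_⟩, ho m (le_refl _), ho1, ?_⟩
  · intro i
    by_cases hi : i = m
    · subst hi; simpa using hn
    · simpa [hi] using hN i
  · intro i hi
    by_cases him : i = m
    · subst him; simpa using hW
    · simpa [him] using I.win i (by omega)
  · intro w a hw hc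
    have hc1 : Compat N m (cnt h) w a := by
      intro i hi j hj
      have := hc i (by omega) j (by rwa [hU N n i hi])
      rwa [ho i (by omega)] at this
    obtain ⟨h1, h2⟩ := I.play w a (by
      intro i hi
      have := hw i (by omega)
      rwa [hU R Rn i hi] at this) hc1
    refine ⟨h1, hP _ _ a h2 ?_ ⟨w m, ?_, ?_, ?_⟩⟩
    · intro i hi
      simp only [hU N n i hi]
    · have := hw m (by omega)
      rwa [Function.update_self] at this
    · simp
    · intro j hj
      have := hc m (by omega) j (by rwa [Function.update_self])
      rw [ho m (le_refl _), I.c0 _ (by omega)] at this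
      simpa using this
  · rw [Finset.sum_range_succ, Function.update_self]
    congr 1
    exact Finset.sum_congr rfl fun i hi => hU k kn i (by simpa using hi)

end Round


/-! ### The concrete strategy -/

def PC (N : ℕ → ℕ) (m L : ℕ) (τ a : ℕ → ℕ) : Prop :=
  (∀ v, v ≤ off N m → lev a v ≤ 8) ∧ lev a (off N m) ≤ L ∧ ∀ i < m, τ i = 0

def PS (N : ℕ → ℕ) (m σ : ℕ) (τ a : ℕ → ℕ) : Prop :=
  (∀ v, v ≤ off N m → lev a v ≤ 8) ∧
  (τ σ = 0 ∧ lev a (off N m) ≤ 5 ∨ τ σ = 1 ∧ lev a (off N m) ≤ 3) ∧ ∀ i < m, i ≠ σ → τ i = 0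

def phi (L : ℕ) : ℕ := if L = 3 then 1 else 0

def fillR : List (List ℕ) := [[1,1,1,0,0], [1,1,0,1,0], [1,0,1,1,0], [0,1,1,1,0]]
def hiR : List (List ℕ) := [[1,1,1,0,0], [1,1,0,1,0], [1,0,1,1,0], [0,1,1,1,0], [1,1,0,0,1],
  [1,0,1,0,1], [0,1,1,0,1], [1,0,0,1,1], [0,1,0,1,1], [0,0,1,1,1]]
def loR : List (List ℕ) := [[2,0,0], [1,1,0], [0,2,0], [1,0,1], [0,1,1]]

theorem fillW : W 4 8 fillR := W_of_wB (by decide +kernel)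
theorem hiW : W 4 9 hiR := W_of_wB (by decide +kernel)
theorem loW : W 2 6 loR := W_of_wB (by decide +kernel)

theorem lev_ext {a : ℕ → ℕ} {e n : ℕ} (h : ∀ v, v ≤ e → lev a v ≤ 8)
    (h' : ∀ j, 0 < j → j ≤ n → lev a (e + j) ≤ 8) : ∀ v, v ≤ e + n → lev a v ≤ 8 := by
  intro v hv
  by_cases hve : v ≤ e
  · exact h v hve
  · have := h' (v - e) (by omega) (by omega)
    rwa [Nat.add_sub_cancel' (by omega)] at this

theorem lev4 {a : ℕ → ℕ} {e : ℕ} {r : List ℕ} (hr : ∀ j < 4, a (e + j) = g r j) :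
    lev a (e + 1) = lev a e + 4 * g r 0 - 3 ∧ lev a (e + 2) = lev a (e + 1) + 4 * g r 1 - 3 ∧
    lev a (e + 3) = lev a (e + 2) + 4 * g r 2 - 3 ∧
    lev a (e + 4) = lev a (e + 3) + 4 * g r 3 - 3 := by
  rw [← hr 0 (by omega), ← hr 1 (by omega), ← hr 2 (by omega), ← hr 3 (by omega)]
  exact ⟨rfl, rfl, rfl, rfl⟩

theorem hi_lev {a : ℕ → ℕ} {e : ℕ} {r : List ℕ} (hr : r ∈ hiR) (ha : ∀ j < 4, a (e + j) = g r j)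
    (he : lev a e ≤ 5) : (∀ j, 0 < j → j ≤ 4 → lev a (e + j) ≤ 8) ∧
      (g r 4 = 0 ∧ lev a (e + 4) ≤ 5 ∨ g r 4 = 1 ∧ lev a (e + 4) ≤ 3) := by
  obtain ⟨h1, h2, h3, h4⟩ := lev4 ha
  simp only [hiR, List.mem_cons, List.not_mem_nil, or_false] at hr
  have key : (lev a (e + 1) ≤ 8 ∧ lev a (e + 2) ≤ 8 ∧ lev a (e + 3) ≤ 8 ∧ lev a (e + 4) ≤ 8) ∧
      (g r 4 = 0 ∧ lev a (e + 4) ≤ 5 ∨ g r 4 = 1 ∧ lev a (e + 4) ≤ 3) := by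
    rcases hr with rfl | rfl | rfl | rfl | rfl | rfl | rfl | rfl | rfl | rfl <;>
      simp [g] at h1 h2 h3 h4 ⊢ <;> omega
  refine ⟨?_, key.2⟩
  intro j h0 hj
  interval_cases j <;> simp [key]

theorem fill_lev {a : ℕ → ℕ} {e M : ℕ} {r : List ℕ} (hr : r ∈ fillR)
    (ha : ∀ j < 4, a (e + j) = g r j) (hM : 3 ≤ M) (hM' : M ≤ 5)
    (he : lev a e ≤ M) : (∀ j, 0 < j → j ≤ 4 → lev a (e + j) ≤ 8) ∧
      g r 4 = 0 ∧ lev a (e + 4) ≤ M := by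
  obtain ⟨h1, h2, h3, h4⟩ := lev4 ha
  simp only [fillR, List.mem_cons, List.not_mem_nil, or_false] at hr
  have key : (lev a (e + 1) ≤ 8 ∧ lev a (e + 2) ≤ 8 ∧ lev a (e + 3) ≤ 8 ∧ lev a (e + 4) ≤ 8) ∧
      g r 4 = 0 ∧ lev a (e + 4) ≤ M := by
    rcases hr with rfl | rfl | rfl | rfl <;> simp [g] at h1 h2 h3 h4 ⊢ <;> omega
  refine ⟨?_, key.2⟩
  intro j h0 hj
  interval_cases j <;> simp [key]

theorem lo_lev {a : ℕ → ℕ} {e : ℕ} {r : List ℕ} (hr : r ∈ loR) (ha : ∀ j < 2, a (e + j) = g r j)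
    (he : lev a e ≤ 3) : (∀ j, 0 < j → j ≤ 2 → lev a (e + j) ≤ 8) ∧
      (g r 2 = 0 ∧ lev a (e + 2) ≤ 5 ∨ g r 2 = 1 ∧ lev a (e + 2) ≤ 3) := by
  have h1 : lev a (e + 1) = lev a e + 4 * g r 0 - 3 := by
    rw [← ha 0 (by omega)]
    rfl
  have h2 : lev a (e + 2) = lev a (e + 1) + 4 * g r 1 - 3 := by
    rw [← ha 1 (by omega)]
    rfl
  simp only [loR, List.mem_cons, List.not_mem_nil, or_false] at hr
  have key : (lev a (e + 1) ≤ 8 ∧ lev a (e + 2) ≤ 8) ∧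
      (g r 2 = 0 ∧ lev a (e + 2) ≤ 5 ∨ g r 2 = 1 ∧ lev a (e + 2) ≤ 3) := by
    rcases hr with rfl | rfl | rfl | rfl | rfl <;> simp [g] at h1 h2 ⊢ <;> omega
  refine ⟨?_, key.2⟩
  intro j h0 hj
  interval_cases j <;> simp [key]

/-- state in which the special block `σ` is pending -/
def SpecSt (A : Algo) (σ e J d : ℕ) : Prop :=
  ∃ N m h R k, (∀ i, N i = 2 ∨ N i = 4) ∧ Inv A N m (PS N m σ) h R k ∧ h.length = off N m ∧
    (∀ i < m, k i ≤ 9) ∧ σ < m ∧ off N (σ + 1) = e ∧ h.length = e + d ∧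
    J ≤ ∑ i ∈ Finset.range m, k i

def ClosedSt (A : Algo) (J : ℕ) : Prop :=
  ∃ N m h R k L, (∀ i, N i = 2 ∨ N i = 4) ∧ Inv A N m (PC N m L) h R k ∧ h.length = off N m ∧
    (∀ i < m, k i ≤ 9) ∧ (L = 3 ∨ L = 5) ∧ J ≤ ∑ i ∈ Finset.range m, k i + phi L

theorem start (A : Algo) : ClosedSt A 0 := by
  refine ⟨fun _ => 4, 0, [], fun _ => [], fun _ => 0, 5, fun _ => Or.inr rfl,
    ⟨fun i hi => by omega, by simp, fun _ _ => rfl, ?_⟩, by simp [off], fun i hi => by omega,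
    Or.inr rfl, Nat.zero_le _⟩
  intro w a _ _
  refine ⟨trivial, ?_, by simp [off, lev], fun i hi => by omega⟩
  intro v hv
  simp only [off, Finset.range_zero, Finset.sum_empty, Nat.le_zero] at hv
  subst hv
  simp [lev]

theorem addSpec {A : Algo} {J : ℕ} (hst : ClosedSt A J) : ∃ σ e, SpecSt A σ e (J + 1) 0 := by
  obtain ⟨N, m, h, R, k, L, hN, I, hl, h9, hL, hJ⟩ := hst
  have main : ∀ (n kn : ℕ) (Rn : List (List ℕ)), (n = 2 ∨ n = 4) → W n kn Rn → kn ≤ 9 →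
      kn = 2 * n + 1 + phi L →
      (∀ (a : ℕ → ℕ) (e : ℕ), ∀ r ∈ Rn, (∀ j < n, a (e + j) = g r j) → lev a e ≤ L →
        (∀ j, 0 < j → j ≤ n → lev a (e + j) ≤ 8) ∧
        (g r n = 0 ∧ lev a (e + n) ≤ 5 ∨ g r n = 1 ∧ lev a (e + n) ≤ 3)) →
      ∃ σ e, SpecSt A σ e (J + 1) 0 := by
    intro n kn Rn hn hW hk9 hkn hlev
    obtain ⟨hN', I', ho, ho1, hs⟩ := addBlock hN I hl hn hW
      (PS (Function.update N m n) (m + 1) m) (by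
        rintro τ τ' a ⟨p1, p2, p3⟩ hττ ⟨r, hr, ht, ha⟩
        have ho1 : off (Function.update N m n) (m + 1) = off N m + n := by
          rw [off_succ, Function.update_self, off_congr (N := N) (m := m)
            (fun i hi => Function.update_of_ne (by omega) _ _) (le_refl _)]
        obtain ⟨q1, q2⟩ := hlev a _ r hr ha p2
        refine ⟨?_, ?_, ?_⟩
        · rw [ho1]
          exact lev_ext p1 q1
        · rw [ho1, ht]
          exact q2
        · intro i hi him
          rw [hττ i (by omega), p3 i (by omega)])
    obtain ⟨h', R', k', I2, hl2, hs2, hd⟩ := rounds hN' n I' (by omega)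
    refine ⟨m, off N m + n, _, m + 1, h', R', k', hN', I2, by omega, ?_, by omega, ho1, by omega,
      by omega⟩
    intro i hi
    refine (hd i).trans ?_
    by_cases him : i = m
    · subst him; simpa using hk9
    · simpa [him] using h9 i (by omega)
  rcases hL with rfl | rfl
  · exact main 2 6 loR (Or.inl rfl) loW (by omega) (by simp [phi])
      (fun a e r hr ha he => lo_lev hr ha he)
  · exact main 4 9 hiR (Or.inr rfl) hiW (by omega) (by simp [phi])
      (fun a e r hr ha he => hi_lev hr ha he)

theorem addFill {A : Algo} {σ e J d : ℕ} (hst : SpecSt A σ e J d) : SpecSt A σ e J (d + 4) := by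
  obtain ⟨N, m, h, R, k, hN, I, hl, h9, hσ, he, hd, hJ⟩ := hst
  have ho1 : off (Function.update N m 4) (m + 1) = off N m + 4 := by
    rw [off_succ, Function.update_self, off_congr (N := N) (m := m)
      (fun i hi => Function.update_of_ne (by omega) _ _) (le_refl _)]
  obtain ⟨hN', I', ho, _, hs⟩ := addBlock hN I hl (Or.inr rfl) fillW
    (PS (Function.update N m 4) (m + 1) σ) (by
      rintro τ τ' a ⟨p1, p2, p3⟩ hττ ⟨r, hr, ht, ha⟩
      have hM : ∃ M, 3 ≤ M ∧ M ≤ 5 ∧ lev a (off N m) ≤ M ∧ (τ σ = 0 ∧ M = 5 ∨ τ σ = 1 ∧ M = 3) := by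
        rcases p2 with ⟨h1, h2⟩ | ⟨h1, h2⟩
        · exact ⟨5, by omega, by omega, h2, Or.inl ⟨h1, rfl⟩⟩
        · exact ⟨3, by omega, by omega, h2, Or.inr ⟨h1, rfl⟩⟩
      obtain ⟨M, hM1, hM2, hM3, hM4⟩ := hM
      obtain ⟨q1, q2, q3⟩ := fill_lev hr ha hM1 hM2 hM3
      refine ⟨?_, ?_, ?_⟩
      · rw [ho1]
        exact lev_ext p1 q1
      · rw [ho1, hττ σ hσ]
        omega
      · intro i hi him
        by_cases him' : i = m
        · subst him'
          omega
        · rw [hττ i (by omega), p3 i (by omega) him])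
  obtain ⟨h', R', k', I2, hl2, hs2, hdk⟩ := rounds hN' 4 I' (by omega)
  refine ⟨_, m + 1, h', R', k', hN', I2, by omega, ?_, by omega, ?_, by omega, by omega⟩
  · intro i hi
    refine (hdk i).trans ?_
    by_cases him : i = m
    · subst him; simp
    · simpa [him] using h9 i (by omega)
  · rw [← he]
    exact off_congr (m := m) (fun i hi => Function.update_of_ne (by omega) _ _) (by omega)

theorem addFills {A : Algo} {σ e J : ℕ} (hst : SpecSt A σ e J 0) (n : ℕ) :
    SpecSt A σ e J (4 * n) := by
  induction n with
  | zero => exact hst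
  | succ n ih => exact addFill ih

theorem close {A : Algo} {T σ e J d : ℕ} (hT : Lat A T) (hst : SpecSt A σ e J d) (hd : T ≤ d) :
    ClosedSt A J := by
  obtain ⟨N, m, h, R, k, hN, I, hl, h9, hσ, he, hd', hJ⟩ := hst
  have hz := closed hT hN I (fun τ a p => p.1) hσ (by omega)
  obtain ⟨r, hr, hk⟩ := W_closed (hN σ) (I.win σ hσ) hz
  have htag : g r (N σ) = 0 ∨ g r (N σ) = 1 := by
    obtain ⟨w, a, hw0, hw, hc, _⟩ := pick hN I hσ hr
    have := (I.play w a hw hc).2.2.1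
    simp only [hw0] at this
    omega
  refine ⟨N, m, h, Function.update R σ [[]], Function.update k σ 0,
    if g r (N σ) = 0 then 5 else 3, hN, ⟨?_, I.len, I.c0, ?_⟩, hl, ?_, ?_, ?_⟩
  · intro i hi
    by_cases hii : i = σ
    · subst hii
      simp only [Function.update_self]
      exact W_zero (r := []) (by simp)
    · simpa [hii] using I.win i hi
  · intro w a hw hc
    have hwσ : w σ = [] := by
      have := hw σ hσ
      rw [Function.update_self] at this
      simpa using this
    have hc' : Compat N m (cnt h) (Function.update w σ r) a := by
      intro i hi j hj
      have h1 := hc i hi j hj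
      by_cases hii : i = σ
      · subst hii
        rw [Function.update_self, hz r hr j hj]
        rw [hwσ] at h1
        simpa [g] using h1
      · rwa [Function.update_of_ne hii]
    obtain ⟨h1, h2, h3, h4⟩ := I.play (Function.update w σ r) a (by
      intro i hi
      by_cases hii : i = σ
      · subst hii; simpa using hr
      · have := hw i hi
        rw [Function.update_of_ne hii] at this
        rwa [Function.update_of_ne hii]) hc'
    refine ⟨h1, h2, ?_, ?_⟩
    · simp only [Function.update_self] at h3
      split_ifs <;> omega
    · intro i hi
      by_cases hii : i = σ
      · subst hii
        simp [hwσ, g]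
      · have := h4 i hi hii
        simpa [hii] using this
  · intro i hi
    by_cases hii : i = σ
    · subst hii; simp
    · simpa [hii] using h9 i hi
  · split_ifs <;> simp
  · have h1 : ∑ i ∈ Finset.range m, k i ≤
        ∑ i ∈ Finset.range m, (Function.update k σ 0 i + if i = σ then g r (N σ) else 0) := by
      apply Finset.sum_le_sum
      intro i _
      by_cases hii : i = σ
      · subst hii; simpa using hk
      · simp [hii]
    rw [Finset.sum_add_distrib, Finset.sum_ite_eq', if_pos (by simpa using hσ)] at h1
    have h2 : g r (N σ) ≤ phi (if g r (N σ) = 0 then 5 else 3) := by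
      rcases htag with h | h <;> simp [h, phi]
    omega

theorem all_periods {A : Algo} {T : ℕ} (hT : Lat A T) (J : ℕ) : ClosedSt A J := by
  induction J with
  | zero => exact start A
  | succ J ih =>
    obtain ⟨σ, e, hs⟩ := addSpec ih
    exact close hT (addFills hs T) (by omega)

theorem bounded {A : Algo} {T J : ℕ} (hT : Lat A T) (hst : ClosedSt A J) : J ≤ 9 * T + 1 := by
  obtain ⟨N, m, h, R, k, L, hN, I, hl, h9, hL, hJ⟩ := hst
  have hk : ∀ i ∈ Finset.range m, k i ≤ if m ≤ i + T then 9 else 0 := by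
    intro i hi
    rw [Finset.mem_range] at hi
    by_cases hm : m ≤ i + T
    · rw [if_pos hm]
      exact h9 i hi
    · rw [if_neg hm]
      have h1 := off_ge hN (i + 1) T
      have h2 := off_mono N (by omega : i + 1 + T ≤ m)
      have hz := closed hT hN I (fun τ a p => p.1) hi (by omega)
      obtain ⟨r, hr, hk⟩ := W_closed (hN i) (I.win i hi) hz
      obtain ⟨w, a, hw0, hw, hc, _⟩ := pick hN I hi hr
      have := (I.play w a hw hc).2.2.2 i hi
      simp only [hw0] at this
      omega
  have h1 := Finset.sum_le_sum hk
  rw [← Finset.sum_filter, Finset.sum_const, smul_eq_mul] at h1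
  have h2 : ((Finset.range m).filter fun i => m ≤ i + T) ⊆ Finset.Ico (m - T) m := by
    intro i hi
    simp only [Finset.mem_filter, Finset.mem_range] at hi
    rw [Finset.mem_Ico]
    omega
  have h3 := Finset.card_le_card h2
  rw [Nat.card_Ico] at h3
  have h4 : phi L ≤ 1 := by
    unfold phi
    split_ifs <;> omega
  have h5 : ((Finset.range m).filter fun i => m ≤ i + T).card ≤ T := by omega
  omega

theorem not_lat (A : Algo) (T : ℕ) : ¬ Lat A T := by
  intro hT
  have := bounded hT (all_periods hT (9 * T + 2))
  omega


end PF

/-- for every deterministic distributed algorithm on a channel with collision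
detection and every bound `T`, there is a 1-activating injection pattern admissible for the
adversary of type `(3/4, 2)` such that some injected packet spends more than `T` rounds
queued before being heard (station `v` still has a pending packet at the beginning of round
`v + T + 1`); hence no such algorithm has bounded packet latency against a 1-activating
adversary of injection rate `3/4` and burstiness at least 2. -/
theorem no_bounded_latency_at_rate_three_quarters (A : Algo) (T : ℕ) :
    ∃ a : ℕ → ℕ, Admissible (3/4) 2 a ∧
      ∃ v : ℕ, 0 < a v ∧ 0 < (exec A a (v + T + 1)).2 v := by
  by_contra hcon
  apply PF.not_lat A T
  intro a ha v hv
  by_contra h0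
  exact hcon ⟨a, ha, v, hv, Nat.pos_of_ne_zero h0⟩
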